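/- arXiv:2403.13172 — 2 statements merged into one kernel-verified Lean document; each statement's English description precedes it below -/
import Mathlib

section
/- Let T_3 be the tree on vertices {w, x, y, z, u₁, a₁, b₁, u₂, a₂, b₂} with edges wx, xy, yz, zu₁, u₁a₁, u₁b₁, zu₂, u₂a₂, u₂b₂. Let Δ_S ≥ 3 be an integer, let v be any vertex of T_3, and let G be the tree on n = 10 + Δ_S vertices obtained from T_3 by adding new vertices s, l_1, …, l_{Δ_S−1} together with the edge vs and the edges s l_i (1 ≤ i ≤ Δ_S−1). Then γ^ID(G) ≤ ((Δ−1)/Δ)·n, where Δ is the maximum degree of G. -/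
open SimpleGraph

/-- The closed neighborhood `N[v]` of a vertex `v` in `G`. -/
def closedNbhd {V : Type*} (G : SimpleGraph V) (v : V) : Set V :=
  insert v (G.neighborSet v)

/-- `C` is an identifying code of `G`: it dominates every vertex and the
closed neighborhoods of distinct vertices intersect `C` differently. -/
def IsIDCode {V : Type*} (G : SimpleGraph V) (C : Set V) : Prop :=
  (∀ v, (closedNbhd G v ∩ C).Nonempty) ∧
  ∀ u w : V, u ≠ w → closedNbhd G u ∩ C ≠ closedNbhd G w ∩ C

/-- The identification number `γ^ID(G)`: the minimum size of an identifying code. -/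
noncomputable def idNum {V : Type*} [Fintype V] (G : SimpleGraph V) : ℕ :=
  sInf {k | ∃ C : Set V, C.ncard = k ∧ IsIDCode G C}

/-- `G` is identifiable (closed-twin-free). -/
def Identifiable {V : Type*} (G : SimpleGraph V) : Prop :=
  ∀ u w : V, u ≠ w → closedNbhd G u ≠ closedNbhd G w

/-- The maximum degree of a finite graph `G`. -/
noncomputable def maxDeg {V : Type*} [Fintype V] (G : SimpleGraph V) : ℕ :=
  Finset.univ.sup fun v => (G.neighborSet v).ncard

/-- `S` is a dominating set of `G`. -/
def IsDomSet {V : Type*} (G : SimpleGraph V) (S : Set V) : Prop :=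
  ∀ v, (closedNbhd G v ∩ S).Nonempty

/-- The domination number `γ(G)`. -/
noncomputable def domNum {V : Type*} [Fintype V] (G : SimpleGraph V) : ℕ :=
  sInf {k | ∃ S : Set V, S.ncard = k ∧ IsDomSet G S}

/-- The star `K_{1,k}`: vertex `0` is adjacent to each of the `k` other vertices. -/
def starGraph (k : ℕ) : SimpleGraph (Fin (k + 1)) :=
  SimpleGraph.fromRel fun a _ => a = 0

/-- The graph obtained from `G'` by appending a star with `k` extra leaves onto the
vertex `v`: we add a new universal vertex `u = Sum.inr none` adjacent to `v`,
and `k` new leaves `Sum.inr (some i)` adjacent to `u` (so the star has `k + 1`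
leaves in total, one of which is identified with `v`, i.e. a `(k+1)`-star is
appended by one of its leaves onto `v`). -/
def appendStar {V : Type*} (G' : SimpleGraph V) (v : V) (k : ℕ) :
    SimpleGraph (V ⊕ Option (Fin k)) :=
  SimpleGraph.fromRel fun a b =>
    (∃ x y, a = Sum.inl x ∧ b = Sum.inl y ∧ G'.Adj x y) ∨
    (a = Sum.inl v ∧ b = Sum.inr none) ∨
    (∃ i, a = Sum.inr none ∧ b = Sum.inr (some i))

/-- The tree `T₃`: a path `w x y z` (vertices `0 1 2 3`) with two 3-stars appended by
a leaf each onto `z = 3`; `u₁ = 4`, `a₁ = 5`, `b₁ = 6`, `u₂ = 7`, `a₂ = 8`, `b₂ = 9`. -/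
def T3graph : SimpleGraph (Fin 10) :=
  SimpleGraph.fromEdgeSet
    {s(0, 1), s(1, 2), s(2, 3), s(3, 4), s(4, 5), s(4, 6), s(3, 7), s(7, 8), s(7, 9)}

/-!
It is enough to find a small code of `T₃` that contains the attachment vertex `v`, dominates every
vertex and separates all vertices other than `v`: adding to it the centre of the appended star and
all but one of its leaves gives an identifying code of the whole tree, since the centre tells `v`
from the rest of `T₃`, and any leaf in the code tells the centre from `v`. Such a code of `T₃` has
6 vertices, or 7 when `v = z`. So 5, respectively 4, vertices stay outside the code of the whole
tree. Since `Δ ≥ Δ_S ≥ 3`, and `Δ ≥ 4` when `v = z`, we have `n = 10 + Δ_S ≤ 5Δ`, respectively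
`n ≤ 4Δ`, which is what the bound `γ^ID ≤ n - n/Δ` asks for.
-/

section General

lemma le_sub_one_div_mul_of_add_le {K : Type*} [Field K] [LinearOrder K] [IsStrictOrderedRing K]
    {a c n Δ : K} (hΔ : 0 < Δ) (hac : a + c ≤ n) (hn : n ≤ c * Δ) : a ≤ (Δ - 1) / Δ * n := by
  calc a ≤ n - c := le_sub_iff_add_le.2 hac
    _ ≤ n - n / Δ := sub_le_sub_left ((div_le_iff₀ hΔ).2 hn) n
    _ = (Δ - 1) / Δ * n := by field_simp

lemma mem_iff_mem_of_inter_eq_inter {α : Type*} {A B C : Set α} (h : A ∩ C = B ∩ C) {c : α}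
    (hc : c ∈ C) : c ∈ A ↔ c ∈ B := by
  simpa [hc] using Set.ext_iff.1 h c

variable {V : Type*} {G : SimpleGraph V}

lemma IsIDCode.idNum_le_ncard [Fintype V] {C : Set V} (hC : IsIDCode G C) :
    idNum G ≤ C.ncard :=
  Nat.sInf_le ⟨C, rfl, hC⟩

lemma ncard_neighborSet_le_maxDeg [Fintype V] (G : SimpleGraph V) (x : V) :
    (G.neighborSet x).ncard ≤ maxDeg G :=
  Finset.le_sup (f := fun x => (G.neighborSet x).ncard) (Finset.mem_univ x)

/-- An identifying code of the rooted graph `(G, v)`: a dominating set containing the root `v` and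
separating the vertices other than `v`. The root is exempt from separation because the centre of
a star appended at `v` will separate it. -/
structure IsRootedIDCode (G : SimpleGraph V) (v : V) (D : Set V) : Prop where
  root_mem : v ∈ D
  isDomSet : IsDomSet G D
  injOn_trace : Set.InjOn (fun x => closedNbhd G x ∩ D) {v}ᶜ

instance [Fintype V] [DecidableEq V] [DecidableRel G.Adj] (v : V) (D : Finset V) :
    Decidable (IsRootedIDCode G v (D : Set V)) :=
  decidable_of_iff
    (v ∈ D ∧ (∀ x, ∃ d ∈ D, d = x ∨ G.Adj x d) ∧
      ∀ x ≠ v, ∀ y ≠ v, (∀ d ∈ D, (d = x ∨ G.Adj x d) ↔ (d = y ∨ G.Adj y d)) → x = y) <| by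
    have trace_eq_iff (x y : V) : closedNbhd G x ∩ D = closedNbhd G y ∩ D ↔
        ∀ d ∈ D, (d = x ∨ G.Adj x d) ↔ (d = y ∨ G.Adj y d) := by
      simp [Set.ext_iff, closedNbhd]
    have dominated_iff (x : V) : (closedNbhd G x ∩ D).Nonempty ↔
        ∃ d ∈ D, d = x ∨ G.Adj x d := by
      simp [Set.Nonempty, closedNbhd, and_comm]
    constructor
    · rintro ⟨hv, hdom, hsep⟩
      exact ⟨hv, fun x => (dominated_iff x).2 (hdom x),
        fun x hx y hy hxy => hsep x hx y hy ((trace_eq_iff x y).1 hxy)⟩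
    · rintro ⟨hv, hdom, hsep⟩
      exact ⟨hv, fun x => (dominated_iff x).1 (hdom x),
        fun x hx y hy hxy => hsep hx hy ((trace_eq_iff x y).2 hxy)⟩

end General

section AppendStar

variable {V : Type*} {G : SimpleGraph V} {v : V} {k : ℕ}

lemma neighborSet_appendStar_inl_self :
    (appendStar G v k).neighborSet (.inl v) = insert (.inr none) (Sum.inl '' G.neighborSet v) := by
  ext (x | _ | i)
  · simpa [appendStar, G.adj_comm x v] using fun h : G.Adj v x => h.ne
  · simp [appendStar]
  · simp [appendStar]

lemma neighborSet_appendStar_center :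
    (appendStar G v k).neighborSet (.inr none) =
      insert (.inl v) (Set.range (Sum.inr ∘ some)) := by
  ext (x | _ | i) <;> simp [appendStar]

lemma inl_mem_closedNbhd_inl {x y : V} :
    .inl y ∈ closedNbhd (appendStar G v k) (.inl x) ↔ y ∈ closedNbhd G x := by
  have ne_of_adj : G.Adj x y → x ≠ y := fun h => h.ne
  simpa [closedNbhd, appendStar, G.adj_comm y x] using
    or_congr_right (and_iff_right_of_imp ne_of_adj)

lemma center_mem_closedNbhd_inl {x : V} :
    .inr none ∈ closedNbhd (appendStar G v k) (.inl x) ↔ x = v := by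
  simp [closedNbhd, appendStar]

lemma leaf_notMem_closedNbhd_inl {x : V} {i : Fin k} :
    .inr (some i) ∉ closedNbhd (appendStar G v k) (.inl x) := by
  simp [closedNbhd, appendStar]

lemma inr_mem_closedNbhd_center {o : Option (Fin k)} :
    .inr o ∈ closedNbhd (appendStar G v k) (.inr none) := by
  cases o <;> simp [closedNbhd, appendStar]

lemma inl_mem_closedNbhd_center {x : V} :
    .inl x ∈ closedNbhd (appendStar G v k) (.inr none) ↔ x = v := by
  simp [closedNbhd, appendStar]

lemma inl_notMem_closedNbhd_leaf {x : V} {i : Fin k} :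
    .inl x ∉ closedNbhd (appendStar G v k) (.inr (some i)) := by
  simp [closedNbhd, appendStar]

lemma inr_mem_closedNbhd_leaf {i : Fin k} {o : Option (Fin k)} :
    .inr o ∈ closedNbhd (appendStar G v k) (.inr (some i)) ↔ o = none ∨ o = some i := by
  cases o <;> simp [closedNbhd, appendStar]

lemma add_one_le_maxDeg_appendStar [Fintype V] (G : SimpleGraph V) (v : V) (k : ℕ) :
    k + 1 ≤ maxDeg (appendStar G v k) := by
  have center_degree : ((appendStar G v k).neighborSet (.inr none)).ncard = k + 1 := by
    rw [neighborSet_appendStar_center, Set.ncard_insert_of_notMem (by simp),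
      Set.ncard_range_of_injective (Sum.inr_injective.comp (Option.some_injective _)),
      Nat.card_fin]
  exact center_degree ▸ ncard_neighborSet_le_maxDeg _ _

lemma ncard_neighborSet_add_one_le_maxDeg_appendStar [Fintype V] (G : SimpleGraph V) (v : V)
    (k : ℕ) : (G.neighborSet v).ncard + 1 ≤ maxDeg (appendStar G v k) := by
  have root_degree : ((appendStar G v k).neighborSet (.inl v)).ncard =
      (G.neighborSet v).ncard + 1 := by
    rw [neighborSet_appendStar_inl_self, Set.ncard_insert_of_notMem (by simp),
      Set.ncard_image_of_injective _ Sum.inl_injective]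
  exact root_degree ▸ ncard_neighborSet_le_maxDeg _ _

/-- The extension of a code `D` of `G` to `appendStar G v k` by the centre of the star and all of
its leaves except `i₀`. -/
def appendStarCode (D : Set V) (i₀ : Fin k) : Set (V ⊕ Option (Fin k)) :=
  Sum.inl '' D ∪ Sum.inr '' {some i₀}ᶜ

lemma inl_mem_appendStarCode {D : Set V} {i₀ : Fin k} {x : V} :
    .inl x ∈ appendStarCode D i₀ ↔ x ∈ D := by
  simp [appendStarCode]

lemma inr_mem_appendStarCode {D : Set V} {i₀ : Fin k} {o : Option (Fin k)} :
    .inr o ∈ appendStarCode D i₀ ↔ o ≠ some i₀ := by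
  simp [appendStarCode]

lemma ncard_appendStarCode [Finite V] (D : Set V) (i₀ : Fin k) :
    (appendStarCode D i₀).ncard = D.ncard + k := by
  have disjoint_parts : Disjoint (Sum.inl '' D) (Sum.inr '' ({some i₀}ᶜ : Set (Option (Fin k)))) :=
    Set.disjoint_image_inl_image_inr
  rw [appendStarCode, Set.ncard_union_eq disjoint_parts,
    Set.ncard_image_of_injective _ Sum.inl_injective,
    Set.ncard_image_of_injective _ Sum.inr_injective, Set.ncard_compl, Set.ncard_singleton,
    Finite.card_option, Nat.card_fin, Nat.add_sub_cancel]

namespace IsRootedIDCode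

variable {D : Set V}

lemma isDomSet_appendStarCode (hD : IsRootedIDCode G v D) (i₀ : Fin k) :
    IsDomSet (appendStar G v k) (appendStarCode D i₀)
  | .inl x =>
    let ⟨d, hdx, hdD⟩ := hD.isDomSet x
    ⟨.inl d, inl_mem_closedNbhd_inl.2 hdx, inl_mem_appendStarCode.2 hdD⟩
  | .inr none => ⟨.inr none, inr_mem_closedNbhd_center, inr_mem_appendStarCode.2 nofun⟩
  | .inr (some _) =>
    ⟨.inr none, inr_mem_closedNbhd_leaf.2 (.inl rfl), inr_mem_appendStarCode.2 nofun⟩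

lemma injective_trace_inl (hD : IsRootedIDCode G v D) (i₀ : Fin k) :
    Function.Injective fun x =>
      closedNbhd (appendStar G v k) (.inl x) ∩ appendStarCode D i₀ := by
  intro x y hxy
  have root_iff : x = v ↔ y = v := by
    simpa only [center_mem_closedNbhd_inl] using mem_iff_mem_of_inter_eq_inter hxy
      (inr_mem_appendStarCode.2 (Option.some_ne_none i₀).symm)
  by_cases hx : x = v
  · exact hx.trans (root_iff.1 hx).symm
  · refine hD.injOn_trace hx (mt root_iff.2 hx) (Set.ext fun d => and_congr_left fun hd => ?_)
    simpa only [inl_mem_closedNbhd_inl] using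
      mem_iff_mem_of_inter_eq_inter hxy (inl_mem_appendStarCode.2 hd)

lemma injective_trace_inr (hD : IsRootedIDCode G v D) (i₀ : Fin k) :
    Function.Injective fun o =>
      closedNbhd (appendStar G v k) (.inr o) ∩ appendStarCode D i₀ := by
  refine Option.injective_iff.2 ⟨fun i j hij => ?_, ?_⟩
  · have same_coded_leaf (l : Fin k) (hl : l ≠ i₀) : l = i ↔ l = j := by
      simpa [inr_mem_closedNbhd_leaf] using mem_iff_mem_of_inter_eq_inter hij
        (inr_mem_appendStarCode.2 (by simpa using hl : some l ≠ some i₀))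
    by_cases hi : i = i₀
    · by_cases hj : j = i₀
      · exact hi.trans hj.symm
      · exact ((same_coded_leaf j hj).2 rfl).symm
    · exact (same_coded_leaf i hi).1 rfl
  · rintro ⟨i, hi⟩
    have root_iff := mem_iff_mem_of_inter_eq_inter hi (inl_mem_appendStarCode.2 hD.root_mem)
    exact inl_notMem_closedNbhd_leaf (root_iff.2 (inl_mem_closedNbhd_center.2 rfl))

lemma trace_inl_ne_trace_inr [Nontrivial (Fin k)] (hD : IsRootedIDCode G v D) (i₀ : Fin k)
    (x : V) (o : Option (Fin k)) :
    closedNbhd (appendStar G v k) (.inl x) ∩ appendStarCode D i₀ ≠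
      closedNbhd (appendStar G v k) (.inr o) ∩ appendStarCode D i₀ := by
  intro h
  rcases o with _ | i
  · obtain ⟨j, hj⟩ := exists_ne i₀
    have leaf_iff := mem_iff_mem_of_inter_eq_inter h
      (inr_mem_appendStarCode.2 (by simpa using hj : some j ≠ some i₀))
    exact leaf_notMem_closedNbhd_inl (leaf_iff.2 inr_mem_closedNbhd_center)
  · obtain ⟨d, hdx, hdD⟩ := hD.isDomSet x
    have dominator_iff := mem_iff_mem_of_inter_eq_inter h (inl_mem_appendStarCode.2 hdD)
    exact inl_notMem_closedNbhd_leaf (dominator_iff.1 (inl_mem_closedNbhd_inl.2 hdx))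

lemma isIDCode_appendStarCode [Nontrivial (Fin k)] (hD : IsRootedIDCode G v D) (i₀ : Fin k) :
    IsIDCode (appendStar G v k) (appendStarCode D i₀) := by
  have injective_trace : Function.Injective fun u =>
      closedNbhd (appendStar G v k) u ∩ appendStarCode D i₀ := by
    rw [← Sum.elim_comp_inl_inr fun u => closedNbhd (appendStar G v k) u ∩ appendStarCode D i₀]
    exact (hD.injective_trace_inl i₀).sumElim (hD.injective_trace_inr i₀)
      (hD.trace_inl_ne_trace_inr i₀)
  exact ⟨hD.isDomSet_appendStarCode i₀, fun _ _ => injective_trace.ne⟩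

lemma idNum_appendStar_le [Fintype V] (hD : IsRootedIDCode G v D) (hk : 2 ≤ k) :
    idNum (appendStar G v k) ≤ D.ncard + k := by
  have := Fin.nontrivial_iff_two_le.2 hk
  let i₀ : Fin k := ⟨0, by lia⟩
  exact ncard_appendStarCode D i₀ ▸ (hD.isIDCode_appendStarCode i₀).idNum_le_ncard

end IsRootedIDCode

end AppendStar

section T3

instance : DecidableRel T3graph.Adj := fun a b =>
  decidable_of_iff
    (s(a, b) ∈ ({s(0, 1), s(1, 2), s(2, 3), s(3, 4), s(4, 5), s(4, 6), s(3, 7), s(7, 8),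
      s(7, 9)} : Finset (Sym2 (Fin 10))) ∧ a ≠ b)
    (by simp [T3graph])

/-- An identifying code of the rooted tree `(T₃, v)` for each vertex `v`. -/
def T3code : Fin 10 → Finset (Fin 10) :=
  ![{0, 3, 4, 5, 7, 8}, {1, 2, 5, 6, 8, 9}, {0, 2, 5, 6, 8, 9}, {0, 2, 3, 4, 5, 7, 8},
    {0, 2, 4, 5, 8, 9}, {0, 2, 4, 5, 8, 9}, {0, 2, 4, 6, 8, 9}, {0, 2, 5, 6, 7, 8},
    {0, 2, 5, 6, 7, 8}, {0, 2, 5, 6, 7, 9}]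

lemma isRootedIDCode_T3code : ∀ v, IsRootedIDCode T3graph v (T3code v : Set (Fin 10)) := by
  decide

lemma card_T3code : ∀ v, (T3code v).card = if v = 3 then 7 else 6 := by
  decide

lemma ncard_neighborSet_T3graph_three : (T3graph.neighborSet 3).ncard = 3 := by
  rw [← Nat.card_coe_set_eq, Nat.card_eq_fintype_card]
  decide

lemma idNum_appendStar_T3graph_le (v : Fin 10) {k : ℕ} (hk : 2 ≤ k) :
    idNum (appendStar T3graph v k) ≤ (if v = 3 then 7 else 6) + k := by
  rw [← card_T3code, ← Set.ncard_coe_finset]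
  exact (isRootedIDCode_T3code v).idNum_appendStar_le hk

end T3

/-- let `G` be the tree on `n = 10 + Δ_S` vertices obtained from `T₃` by
appending a `Δ_S`-star (`Δ_S ≥ 3`) by one of its leaves onto any vertex `v` of `T₃`.
Then `γ^ID(G) ≤ ((Δ−1)/Δ)·n`, where `Δ` is the maximum degree of `G`. -/
theorem stmt_12 (ΔS : ℕ) (hΔS : 3 ≤ ΔS) (v : Fin 10) :
    (idNum (appendStar T3graph v (ΔS - 1)) : ℝ) ≤
      ((maxDeg (appendStar T3graph v (ΔS - 1)) : ℝ) - 1) /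
        (maxDeg (appendStar T3graph v (ΔS - 1)) : ℝ) * ((10 : ℝ) + (ΔS : ℝ)) := by
  have code_le := idNum_appendStar_T3graph_le v (k := ΔS - 1) (by lia)
  have center_degree_le := add_one_le_maxDeg_appendStar T3graph v (ΔS - 1)
  have root_degree_le := ncard_neighborSet_add_one_le_maxDeg_appendStar T3graph v (ΔS - 1)
  have maxDeg_pos : (0 : ℝ) < maxDeg (appendStar T3graph v (ΔS - 1)) := by
    exact_mod_cast (by lia : 0 < maxDeg (appendStar T3graph v (ΔS - 1)))
  by_cases hv : v = 3
  · subst hv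
    rw [if_pos rfl] at code_le
    rw [ncard_neighborSet_T3graph_three] at root_degree_le
    apply le_sub_one_div_mul_of_add_le (c := 4) maxDeg_pos <;> norm_cast <;> lia
  · rw [if_neg hv] at code_le
    apply le_sub_one_div_mul_of_add_le (c := 5) maxDeg_pos <;> norm_cast <;> lia
end

section
/- Let T_7 be the tree on the 13 vertices {c, v₁, v₂, v₃, a₁, b₁, a₂, b₂, a₃, b₃, u, p, q} with edges cv₁, cv₂, cv₃, v₁a₁, v₁b₁, v₂a₂, v₂b₂, v₃a₃, v₃b₃, a₁u, up, uq (three 3-stars appended by a leaf each onto a common center c, and one further 3-star appended by a leaf onto the leaf a₁). Then γ^ID(T_7) = 9 = (2/3)·13 + 1/3. -/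
open SimpleGraph

/-- The tree `T₇`: three 3-stars appended by a leaf each onto a common center `c = 0`
(with `v₁ = 1, v₂ = 2, v₃ = 3`, leaves `a₁ = 4, b₁ = 5, a₂ = 6, b₂ = 7, a₃ = 8,
b₃ = 9`), and one further 3-star (`u = 10, p = 11, q = 12`) appended by a leaf onto
the leaf `a₁`. -/
def T7graph : SimpleGraph (Fin 13) :=
  SimpleGraph.fromEdgeSet
    {s(0, 1), s(0, 2), s(0, 3), s(1, 4), s(1, 5), s(2, 6), s(2, 7),
     s(3, 8), s(3, 9), s(4, 10), s(10, 11), s(10, 12)}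

/-! Each of the blocks `{v₂, a₂, b₂}`, `{v₃, a₃, b₃}`, `{u, p, q}` and `{c, v₁, a₁, b₁}` contains
at least two vertices of an identifying code `C`, because leaves must be dominated and separated
from each other and from their support vertex. The task is to find a ninth vertex. Separating `b₁`
from `v₁` puts `c` or `a₁` in `C`, and dominating `b₁` puts `v₁` or `b₁` in `C`, so the last block
contributes three vertices if both `c` and `a₁` are in `C`. Otherwise let `z` be the one of `c` and
`a₁` that is not in `C`. The appended stars next to `z` (those of `v₂` and `v₃` if `z = c`, that of
`u` if `z = a₁`) have both leaves in `C`, so one whose center is in `C` contributes three vertices.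
If no such center is in `C`, then `z` is dominated by `v₁` alone, so separating it from `b₁`
requires `b₁ ∈ C`, and the last block again contributes three vertices. -/

section Leaves

variable {V : Type*} {G : SimpleGraph V} {C : Set V} {v x z a b : V}

/-- `a` is a leaf of `G` whose support vertex (its only neighbor) is `v`. -/
def IsLeafAt (G : SimpleGraph V) (v a : V) : Prop :=
  G.neighborSet a = {v}

lemma mem_closedNbhd : x ∈ closedNbhd G v ↔ x = v ∨ G.Adj v x :=
  Iff.rfl

lemma IsLeafAt.adj (ha : IsLeafAt G v a) : G.Adj v a := by
  have : v ∈ G.neighborSet a := ha ▸ Set.mem_singleton v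
  exact this.symm

lemma IsLeafAt.closedNbhd_eq (ha : IsLeafAt G v a) : closedNbhd G a = {a, v} :=
  congrArg (insert a) ha

lemma isIDCode_iff_forall_exists_mem :
    IsIDCode G C ↔ (∀ v, ∃ x ∈ C, x ∈ closedNbhd G v) ∧
      ∀ u w, u ≠ w → ∃ x ∈ C, ¬(x ∈ closedNbhd G u ↔ x ∈ closedNbhd G w) := by
  simp only [IsIDCode, Set.Nonempty, Set.mem_inter_iff, ne_eq, Set.ext_iff, not_forall,
    and_comm, and_congr_right_iff, exists_prop]

lemma IsIDCode.center_mem_or_leaf_mem (hC : IsIDCode G C) (ha : IsLeafAt G v a) :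
    v ∈ C ∨ a ∈ C := by
  obtain ⟨x, hx, hxC⟩ := hC.1 a
  rcases ha.closedNbhd_eq ▸ hx with rfl | rfl
  exacts [.inr hxC, .inl hxC]

lemma IsIDCode.exists_adj_mem_ne_leaf (hC : IsIDCode G C) (ha : IsLeafAt G v a) :
    ∃ x ∈ C, G.Adj v x ∧ x ≠ a := by
  obtain ⟨x, hxC, hx⟩ := (isIDCode_iff_forall_exists_mem.1 hC).2 v a ha.adj.ne
  have hav := ha.adj
  rw [ha.closedNbhd_eq, mem_closedNbhd] at hx
  grind

/-- Otherwise `z` and `b` would both be identified by `{v}`. -/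
lemma IsIDCode.center_mem_and_leaf_mem (hC : IsIDCode G C) (hb : IsLeafAt G v b) (hzb : z ≠ b)
    (hz : closedNbhd G z ∩ C ⊆ {v}) : v ∈ C ∧ b ∈ C := by
  have hzv : closedNbhd G z ∩ C = {v} := (hC.1 z).subset_singleton_iff.1 hz
  have hvC : v ∈ C := (hzv.ge rfl).2
  refine ⟨hvC, by_contra fun hbC => hC.2 z b hzb ?_⟩
  rw [hzv, hb.closedNbhd_eq, Set.insert_inter_of_notMem hbC,
    Set.singleton_inter_of_mem hvC]

end Leaves

section Counting

variable {V : Type*} [DecidableEq V] {G : SimpleGraph V} {C : Finset V} {v b : V}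

/-- Two leaves outside `C` would not be separated, and a single one forces `v ∈ C`. -/
lemma IsIDCode.card_leaves_le (hC : IsIDCode G C) {L : Finset V} (hL : ∀ a ∈ L, IsLeafAt G v a) :
    L.card ≤ (C ∩ insert v L).card := by
  by_cases hLC : L ⊆ C
  · exact Finset.card_le_card (Finset.subset_inter hLC (Finset.subset_insert v L))
  · obtain ⟨a, haL, haC⟩ := Finset.not_subset.1 hLC
    have hvC : v ∈ C := (hC.center_mem_or_leaf_mem (hL a haL)).resolve_right haC
    have ha : closedNbhd G a ∩ C ⊆ {v} := by
      rw [(hL a haL).closedNbhd_eq, Set.insert_inter_of_notMem haC]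
      exact Set.inter_subset_left
    have hothers : L.erase a ⊆ C := fun b hb =>
      (hC.center_mem_and_leaf_mem (hL b (Finset.mem_of_mem_erase hb))
        (Finset.ne_of_mem_erase hb).symm ha).2
    have hvL : v ∉ L.erase a := fun hv => (hL v (Finset.mem_of_mem_erase hv)).adj.ne rfl
    calc L.card = (insert v (L.erase a)).card := by
          rw [Finset.card_insert_of_notMem hvL, Finset.card_erase_add_one haL]
      _ ≤ (C ∩ insert v L).card := Finset.card_le_card <| Finset.subset_inter
          (Finset.insert_subset hvC hothers) (Finset.insert_subset_insert v (L.erase_subset a))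

lemma IsIDCode.two_le_card_inter_of_closedNbhd_subset (hC : IsIDCode G C) (hb : IsLeafAt G v b)
    {S : Finset V} (hS : closedNbhd G v ⊆ S) : 2 ≤ (C ∩ S).card := by
  obtain ⟨x, hxC, hvx, hxb⟩ := hC.exists_adj_mem_ne_leaf hb
  obtain ⟨y, hyC, hy, hyx⟩ : ∃ y ∈ C, y ∈ closedNbhd G v ∧ y ≠ x := by
    rcases hC.center_mem_or_leaf_mem hb with hvC | hbC
    exacts [⟨v, hvC, .inl rfl, hvx.ne⟩, ⟨b, hbC, .inr hb.adj, hxb.symm⟩]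
  exact Finset.one_lt_card.2 ⟨y, Finset.mem_inter.2 ⟨hyC, hS hy⟩, x,
    Finset.mem_inter.2 ⟨hxC, hS (.inr hvx)⟩, hyx⟩

end Counting

section AppendedStars

variable {V : Type*} {G : SimpleGraph V} {x v a b : V}

/-- A 3-star with center `v` is appended onto `x` by one of its leaves: the neighbors of `v` are `x`
and two leaves `a ≠ b` of `G`. -/
structure IsAppendedStar (G : SimpleGraph V) (x v a b : V) : Prop where
  neighborSet_center : G.neighborSet v = {x, a, b}
  left : IsLeafAt G v a
  right : IsLeafAt G v b
  ne : a ≠ b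

lemma IsAppendedStar.swap (h : IsAppendedStar G x v a b) : IsAppendedStar G x v b a :=
  ⟨by rw [h.neighborSet_center, Set.pair_comm], h.right, h.left, h.ne.symm⟩

lemma IsAppendedStar.right_mem {C : Set V} (h : IsAppendedStar G x v a b) (hC : IsIDCode G C)
    (hx : x ∉ C) : b ∈ C := by
  obtain ⟨w, hwC, hvw, hwa⟩ := hC.exists_adj_mem_ne_leaf h.left
  have hw : w ∈ ({x, a, b} : Set V) := h.neighborSet_center ▸ hvw
  rcases hw with rfl | rfl | rfl
  exacts [absurd hwC hx, absurd rfl hwa, hwC]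

variable [DecidableEq V] {C : Finset V}

lemma IsAppendedStar.two_le_card_inter (h : IsAppendedStar G x v a b) (hC : IsIDCode G C) :
    2 ≤ (C ∩ {v, a, b}).card := by
  have hleaves : ∀ c ∈ ({a, b} : Finset V), IsLeafAt G v c := by
    simp only [Finset.mem_insert, Finset.mem_singleton, forall_eq_or_imp, forall_eq]
    exact ⟨h.left, h.right⟩
  simpa only [Finset.card_pair h.ne] using hC.card_leaves_le hleaves

lemma IsAppendedStar.three_le_card_inter (h : IsAppendedStar G x v a b) (hC : IsIDCode G C)
    (hx : x ∉ C) (hv : v ∈ C) : 3 ≤ (C ∩ {v, a, b}).card := by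
  have ha : a ∈ C := h.swap.right_mem hC hx
  have hb : b ∈ C := h.right_mem hC hx
  exact Finset.two_lt_card.2 ⟨v, by simp [hv], a, by simp [ha], b, by simp [hb],
    h.left.adj.ne, h.right.adj.ne, h.ne⟩

end AppendedStars

lemma idNum_eq_card {V : Type*} [Fintype V] {G : SimpleGraph V} {C : Finset V}
    (hC : IsIDCode G C) (hmin : ∀ D : Finset V, IsIDCode G D → C.card ≤ D.card) :
    idNum G = C.card := by
  refine IsLeast.csInf_eq ⟨⟨C, Set.ncard_coe_finset C, hC⟩, ?_⟩
  rintro _ ⟨D, rfl, hD⟩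
  lift D to Finset V using D.toFinite
  rw [Set.ncard_coe_finset]
  exact hmin D hD

namespace T7graph

instance : DecidableRel T7graph.Adj := by
  unfold T7graph
  infer_instance

instance (v : Fin 13) : DecidablePred (· ∈ closedNbhd T7graph v) :=
  fun _ => decidable_of_iff _ mem_closedNbhd.symm

lemma isAppendedStar_two : IsAppendedStar T7graph 0 2 6 7 :=
  ⟨Set.ext (by decide), Set.ext (by decide), Set.ext (by decide), by decide⟩

lemma isAppendedStar_three : IsAppendedStar T7graph 0 3 8 9 :=
  ⟨Set.ext (by decide), Set.ext (by decide), Set.ext (by decide), by decide⟩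

lemma isAppendedStar_ten : IsAppendedStar T7graph 4 10 11 12 :=
  ⟨Set.ext (by decide), Set.ext (by decide), Set.ext (by decide), by decide⟩

lemma isLeafAt_one_five : IsLeafAt T7graph 1 5 :=
  Set.ext (by decide)

lemma closedNbhd_zero : closedNbhd T7graph 0 = {0, 1, 2, 3} :=
  Set.ext (by decide)

lemma closedNbhd_one : closedNbhd T7graph 1 = {0, 1, 4, 5} :=
  Set.ext (by decide)

lemma closedNbhd_four : closedNbhd T7graph 4 = {1, 4, 10} :=
  Set.ext (by decide)

variable {C : Finset (Fin 13)}

lemma zero_mem_or_four_mem (hC : IsIDCode T7graph C) : 0 ∈ C ∨ 4 ∈ C := by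
  obtain ⟨x, hxC, hx, hx5⟩ := hC.exists_adj_mem_ne_leaf isLeafAt_one_five
  have : ∀ x, T7graph.Adj 1 x → x ≠ 5 → x = 0 ∨ x = 4 := by decide
  rcases this x hx hx5 with rfl | rfl
  exacts [.inl hxC, .inr hxC]

lemma three_le_card_of_zero_mem_of_four_mem (hC : IsIDCode T7graph C) (h0 : 0 ∈ C)
    (h4 : 4 ∈ C) : 3 ≤ (C ∩ {0, 1, 4, 5}).card := by
  rcases hC.center_mem_or_leaf_mem isLeafAt_one_five with h1 | h5
  · exact Finset.two_lt_card.2 ⟨0, by simp [h0], 4, by simp [h4], 1, by simp_all, by decide⟩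
  · exact Finset.two_lt_card.2 ⟨0, by simp [h0], 4, by simp [h4], 5, by simp_all, by decide⟩

lemma three_le_card_of_zero_notMem (hC : IsIDCode T7graph C) (h0 : 0 ∉ C) :
    3 ≤ (C ∩ {0, 1, 4, 5}).card ∨ 3 ≤ (C ∩ {2, 6, 7}).card ∨ 3 ≤ (C ∩ {3, 8, 9}).card := by
  by_cases h2 : 2 ∈ C
  · exact .inr (.inl (isAppendedStar_two.three_le_card_inter hC h0 h2))
  by_cases h3 : 3 ∈ C
  · exact .inr (.inr (isAppendedStar_three.three_le_card_inter hC h0 h3))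
  have hcode : closedNbhd T7graph 0 ∩ C ⊆ {1} := by
    rw [closedNbhd_zero]
    rintro x ⟨rfl | rfl | rfl | rfl, hx⟩ <;> simp_all
  obtain ⟨h1, h5⟩ := hC.center_mem_and_leaf_mem isLeafAt_one_five (by decide) hcode
  have h4 := (zero_mem_or_four_mem hC).resolve_left h0
  exact .inl (Finset.two_lt_card.2 ⟨1, by simp_all, 4, by simp_all, 5, by simp_all, by decide⟩)

lemma three_le_card_of_four_notMem (hC : IsIDCode T7graph C) (h4 : 4 ∉ C) :
    3 ≤ (C ∩ {0, 1, 4, 5}).card ∨ 3 ≤ (C ∩ {10, 11, 12}).card := by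
  by_cases h10 : 10 ∈ C
  · exact .inr (isAppendedStar_ten.three_le_card_inter hC h4 h10)
  have hcode : closedNbhd T7graph 4 ∩ C ⊆ {1} := by
    rw [closedNbhd_four]
    rintro x ⟨rfl | rfl | rfl, hx⟩ <;> simp_all
  obtain ⟨h1, h5⟩ := hC.center_mem_and_leaf_mem isLeafAt_one_five (by decide) hcode
  have h0 := (zero_mem_or_four_mem hC).resolve_right h4
  exact .inl (Finset.two_lt_card.2 ⟨0, by simp_all, 1, by simp_all, 5, by simp_all, by decide⟩)

lemma sum_card_inter_le_card (C : Finset (Fin 13)) :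
    (C ∩ {0, 1, 4, 5}).card + (C ∩ {2, 6, 7}).card + (C ∩ {3, 8, 9}).card +
      (C ∩ {10, 11, 12}).card ≤ C.card := by
  have hdisj : ∀ i, {S ∈ ({{0, 1, 4, 5}, {2, 6, 7}, {3, 8, 9}, {10, 11, 12}} :
      Finset (Finset (Fin 13))) | i ∈ S}.card ≤ 1 := by
    decide
  have h := Finset.sum_card_inter_le (s := C) fun i _ => hdisj i
  rw [Finset.sum_insert (by decide), Finset.sum_insert (by decide), Finset.sum_pair (by decide)]
    at h
  lia

theorem nine_le_card (hC : IsIDCode T7graph C) : 9 ≤ C.card := by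
  have hhub : 2 ≤ (C ∩ {0, 1, 4, 5}).card :=
    hC.two_le_card_inter_of_closedNbhd_subset isLeafAt_one_five (by simp [closedNbhd_one])
  have hstar₂ := isAppendedStar_two.two_le_card_inter hC
  have hstar₃ := isAppendedStar_three.two_le_card_inter hC
  have hstar₁₀ := isAppendedStar_ten.two_le_card_inter hC
  have hsum := sum_card_inter_le_card C
  by_cases h0 : 0 ∈ C
  · by_cases h4 : 4 ∈ C
    · have := three_le_card_of_zero_mem_of_four_mem hC h0 h4
      lia
    · have := three_le_card_of_four_notMem hC h4
      lia
  · have := three_le_card_of_zero_notMem hC h0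
    lia

theorem isIDCode_nine :
    IsIDCode T7graph ({0, 1, 2, 3, 4, 6, 8, 10, 11} : Finset (Fin 13)) := by
  rw [isIDCode_iff_forall_exists_mem]
  simp only [Finset.mem_coe]
  decide

theorem idNum_eq : idNum T7graph = 9 :=
  idNum_eq_card isIDCode_nine fun _ => nine_le_card

end T7graph

/-- `γ^ID(T₇) = 9 = (2/3)·13 + 1/3`. -/
theorem stmt_15 : idNum T7graph = 9 ∧ (idNum T7graph : ℝ) = 2 / 3 * 13 + 1 / 3 := by
  rw [T7graph.idNum_eq]
  norm_num
end
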